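/- The group SO₄(ℂ) := {M ∈ GL₄(ℂ) : Mᵀ M = 1 and det M = 1} is acceptable: for every finite group Γ and homomorphisms φ, φ' : Γ → SO₄(ℂ) that are pointwise conjugate in SO₄(ℂ), there exists g ∈ SO₄(ℂ) conjugating φ to φ'. -/

import Mathlib

/-!
Over an algebraically closed field of characteristic zero the group `Oₙ` is acceptable: equal
characters give an intertwiner `A`, and dividing `A` by a square root of `Aᵀ * A` that is a
polynomial in `Aᵀ * A` makes it orthogonal. So locally conjugate `φ, φ' : Γ → SO₄` satisfy
`φ' = s φ s⁻¹` for some `s ∈ O₄`, and it remains to treat `det s = -1` by finding `r ∈ O₄` of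
determinant `-1` that commutes with `φ`.

The invariant `g ↦ Pf (g - gᵀ)` is multiplied by `det s` under conjugation by `s`, but takes the
same values on `φ γ` and `φ' γ`, so it vanishes on the image of `φ`. Up to sign it is the difference
of the characters of the self-dual and anti-self-dual parts `Λ⁺`, `Λ⁻` of `Λ² K⁴`; these are
therefore isomorphic as orthogonal representations of `Γ`, through some `T ∈ SO₃`. Identifying `K⁴`
with the quaternions, so that `Λ⁺` and `Λ⁻` are the left and right multiplications by imaginary
quaternions, `r v = (v + ∑ b, T(e_b) v e_b) / 2` commutes with `φ`; it exchanges `Λ⁺` and `Λ⁻`,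
which forces `det r = -1`.
-/

open Matrix

noncomputable section

/-- Membership in `SO_m(ℂ) = {M ∈ GL_m(ℂ) : Mᵀ M = 1 and det M = 1}`. -/
def memSO (m : ℕ) (g : Matrix (Fin m) (Fin m) ℂ) : Prop :=
  gᵀ * g = 1 ∧ g.det = 1

/-! ### Representations with equal characters -/

section Characters

open Module Representation

variable {k G V W : Type*} [Field k] [Group G] [AddCommGroup V] [Module k V] [AddCommGroup W]
  [Module k W] {ρ : Representation k G V} {σ : Representation k G W}

theorem isCompl_toSubmodule {U U' : Subrepresentation ρ} (h : IsCompl U U') :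
    IsCompl U.toSubmodule U'.toSubmodule :=
  isCompl_iff.2 ⟨disjoint_iff.2 (congrArg Subrepresentation.toSubmodule h.inf_eq_bot),
    codisjoint_iff.2 (congrArg Subrepresentation.toSubmodule h.sup_eq_top)⟩

/-- A representation is the direct sum of two complementary subrepresentations. -/
def prodEquivOfIsCompl {U U' : Subrepresentation ρ} (h : IsCompl U U') :
    (U.toRepresentation.prod U'.toRepresentation).Equiv ρ :=
  .mk (Submodule.prodEquivOfIsCompl _ _ (isCompl_toSubmodule h)) fun g ↦ by
    ext v <;> simp [Representation.prod, Subrepresentation.toRepresentation]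

/-- The first isomorphism theorem, for a complement of the kernel in place of the quotient. -/
def kerComplementEquivRange (f : IntertwiningMap ρ σ) {U : Subrepresentation ρ}
    (h : IsCompl U f.ker) : U.toRepresentation.Equiv f.range.toRepresentation :=
  .mk (f.toLinearMap.kerComplementEquivRange (isCompl_toSubmodule h)) fun g ↦ by
    ext v
    exact f.isIntertwining _ _ g v

/-- The direct sum of two equivalences of representations. -/
def prodCongrEquiv {V' W' : Type*} [AddCommGroup V'] [Module k V'] [AddCommGroup W']
    [Module k W'] {ρ' : Representation k G V'} {σ' : Representation k G W'}
    (e : ρ.Equiv σ) (e' : ρ'.Equiv σ') : (ρ.prod ρ').Equiv (σ.prod σ') :=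
  .mk (e.toLinearEquiv.prodCongr e'.toLinearEquiv) fun g ↦ LinearMap.ext fun v ↦
    Prod.ext (e.isIntertwining _ _ g v.1) (e'.isIntertwining _ _ g v.2)

theorem character_prod [FiniteDimensional k V] [FiniteDimensional k W] :
    (ρ.prod σ).character = ρ.character + σ.character :=
  funext fun _ ↦ LinearMap.trace_prodMap' _ _

theorem character_of_isCompl [FiniteDimensional k V] {U U' : Subrepresentation ρ}
    (h : IsCompl U U') :
    ρ.character = U.toRepresentation.character + U'.toRepresentation.character := by
  rw [← char_iso (prodEquivOfIsCompl h), character_prod]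

theorem finrank_ker_lt [FiniteDimensional k V] {f : IntertwiningMap ρ σ} (hf : f ≠ 0) :
    finrank k f.ker.toSubmodule < finrank k V :=
  Submodule.finrank_lt fun h ↦ hf <| IntertwiningMap.ext <| LinearMap.ker_eq_top.1 h

variable [CharZero k] [Finite G]

theorem finrank_intertwiningMap_eq_of_character_eq {V' : Type*} [AddCommGroup V'] [Module k V']
    {ρ' : Representation k G V'} [FiniteDimensional k V] [FiniteDimensional k W]
    [FiniteDimensional k V'] (h : ρ'.character = σ.character) :
    finrank k (IntertwiningMap ρ ρ') = finrank k (IntertwiningMap ρ σ) := by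
  have := Fintype.ofFinite G
  have : Invertible (Nat.card G : k) := invertibleOfNonzero (by exact_mod_cast Nat.card_pos.ne')
  rw [← Nat.cast_inj (R := k), ← card_inv_mul_sum_char_mul_char_eq_finrank, h,
    card_inv_mul_sum_char_mul_char_eq_finrank]

theorem exists_intertwiningMap_ne_zero [FiniteDimensional k V] [FiniteDimensional k W]
    [Nontrivial V] (h : ρ.character = σ.character) : ∃ f : IntertwiningMap ρ σ, f ≠ 0 := by
  have (V' : Type _) [AddCommGroup V'] [Module k V'] [FiniteDimensional k V']
      (ρ' : Representation k G V') : FiniteDimensional k (IntertwiningMap ρ ρ') :=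
    Module.Finite.equiv (invariantsEquivIntertwiningMap ρ ρ')
  have : Nontrivial (IntertwiningMap ρ ρ) := by
    obtain ⟨v, hv⟩ := exists_ne (0 : V)
    exact ⟨.id ρ, 0, fun h0 ↦ hv (congrArg (fun f : IntertwiningMap ρ ρ ↦ f v) h0)⟩
  have hpos : 0 < finrank k (IntertwiningMap ρ σ) := by
    rw [← finrank_intertwiningMap_eq_of_character_eq h]
    exact finrank_pos
  have := finrank_pos_iff.1 hpos
  exact exists_ne 0

theorem nonempty_equiv_of_character_eq [FiniteDimensional k V] [FiniteDimensional k W]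
    (h : ρ.character = σ.character) : Nonempty (ρ.Equiv σ) := by
  induction hd : finrank k V using Nat.strong_induction_on generalizing V W with
  | _ d ih =>
  have : NeZero (Nat.card G : k) := ⟨by exact_mod_cast Nat.card_pos.ne'⟩
  rcases subsingleton_or_nontrivial V with hV | hV
  · have hdim : finrank k V = finrank k W := by simpa using congrFun h 1
    have e : V ≃ₗ[k] W := .ofFinrankEq V W hdim
    exact ⟨.mk e fun g ↦ LinearMap.ext fun v ↦ e.symm.injective (Subsingleton.elim _ _)⟩
  · obtain ⟨f, hf⟩ := exists_intertwiningMap_ne_zero h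
    obtain ⟨U, hU⟩ := exists_isCompl f.ker
    obtain ⟨D, hD⟩ := exists_isCompl f.range
    have hker : f.ker.toRepresentation.character = D.toRepresentation.character := by
      rw [character_of_isCompl hU, character_of_isCompl hD, add_comm,
        char_iso (kerComplementEquivRange f hU.symm)] at h
      exact add_left_cancel h
    obtain ⟨e⟩ := ih _ (hd ▸ finrank_ker_lt hf) hker rfl
    exact ⟨(prodEquivOfIsCompl hU.symm).symm.trans <|
      (prodCongrEquiv (kerComplementEquivRange f hU.symm) e).trans (prodEquivOfIsCompl hD)⟩

theorem exists_conj_of_trace_eq {n : Type*} [Fintype n] [DecidableEq n] (φ ψ : G →* Matrix n n k)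
    (h : ∀ g, (φ g).trace = (ψ g).trace) : ∃ A : (Matrix n n k)ˣ, ∀ g, A * φ g = ψ g * A := by
  let toRep (φ : G →* Matrix n n k) : Representation k G (n → k) :=
    (Matrix.toLinAlgEquiv' : Matrix n n k ≃ₐ[k] _).toMulEquiv.toMonoidHom.comp φ
  have hχ : (toRep φ).character = (toRep ψ).character := funext fun g ↦
    (Matrix.trace_toLin'_eq (φ g)).trans ((h g).trans (Matrix.trace_toLin'_eq (ψ g)).symm)
  obtain ⟨e⟩ := nonempty_equiv_of_character_eq hχ
  refine ⟨⟨LinearMap.toMatrix' e.toLinearEquiv, LinearMap.toMatrix' e.toLinearEquiv.symm, ?_, ?_⟩,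
    fun g ↦ Matrix.toLin'.injective ?_⟩
  · rw [← LinearMap.toMatrix'_comp, LinearEquiv.comp_symm, LinearMap.toMatrix'_id]
  · rw [← LinearMap.toMatrix'_comp, LinearEquiv.symm_comp, LinearMap.toMatrix'_id]
  · rw [Matrix.toLin'_mul, Matrix.toLin'_mul, Matrix.toLin'_toMatrix']
    exact LinearMap.ext fun v ↦ e.isIntertwining _ _ g v

end Characters

/-! ### Square roots in finite-dimensional algebras -/

section SquareRoots

open Polynomial

variable {K : Type*} [Field K] [IsAlgClosed K]

theorem isSquare_of_isReduced {B : Type*} [CommRing B] [Algebra K B] [FiniteDimensional K B]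
    [IsReduced B] (b : B) : IsSquare b := by
  have := IsArtinianRing.of_finite K B
  have hres (m : MaximalSpectrum B) : ∃ y, y ^ 2 = Ideal.Quotient.mk m.asIdeal b := by
    obtain ⟨c, hc⟩ :=
      (IsAlgClosed.algebraMap_bijective_of_isIntegral (k := K) (K := B ⧸ m.asIdeal)).2
        (Ideal.Quotient.mk m.asIdeal b)
    obtain ⟨z, hz⟩ := IsAlgClosed.exists_pow_nat_eq c two_pos
    exact ⟨algebraMap K _ z, by rw [← map_pow, hz, hc]⟩
  choose y hy using hres
  refine (isSquare_iff_exists_sq b).2 ⟨(IsArtinianRing.equivPi B).symm y, ?_⟩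
  rw [← map_pow, AlgEquiv.eq_symm_apply]
  exact funext fun m ↦ (hy m).symm

theorem isSquare_of_isNilpotent_sub_sq {B : Type*} [CommRing B] (h2 : IsUnit (2 : B)) {u x : B}
    (hu : IsUnit u) (hx : IsNilpotent (x ^ 2 - u)) : IsSquare u := by
  have hx_unit : IsUnit x := by
    have : IsUnit (x ^ 2) := by
      simpa using hx.isUnit_add_right_of_commute hu (Commute.all _ _)
    exact (isUnit_pow_iff two_ne_zero).1 this
  obtain ⟨r, ⟨-, hr⟩, -⟩ := existsUnique_nilpotent_sub_and_aeval_eq_zero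
    (P := X ^ 2 - C u) (x := x) (by simpa using hx)
    (by simpa [one_add_one_eq_two] using h2.mul hx_unit)
  exact (isSquare_iff_exists_sq u).2 ⟨r, (sub_eq_zero.1 (by simpa using hr)).symm⟩

theorem isSquare_of_isUnit [NeZero (2 : K)] {B : Type*} [CommRing B] [Algebra K B]
    [FiniteDimensional K B] {u : B} (hu : IsUnit u) : IsSquare u := by
  have : IsReduced (B ⧸ nilradical B) :=
    (Ideal.isRadical_iff_quotient_reduced _).1 (Ideal.radical_isRadical _)
  obtain ⟨y, hy⟩ := isSquare_of_isReduced (K := K) (Ideal.Quotient.mk (nilradical B) u)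
  obtain ⟨x, rfl⟩ := Ideal.Quotient.mk_surjective y
  have h2 : IsUnit (2 : B) := by
    simpa only [map_ofNat] using (IsUnit.mk0 (2 : K) two_ne_zero).map (algebraMap K B)
  refine isSquare_of_isNilpotent_sub_sq h2 (x := x) hu ?_
  rw [← mem_nilradical, ← Ideal.Quotient.eq_zero_iff_mem, map_sub, map_pow, hy, sq, sub_self]

theorem exists_mem_adjoin_mul_self_eq [NeZero (2 : K)] {A : Type*} [Ring A] [Algebra K A]
    [FiniteDimensional K A] {a : A} (ha : IsUnit a) :
    ∃ r ∈ Algebra.adjoin K {a}, r * r = a := by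
  let a' : Algebra.adjoin K {a} := ⟨a, Algebra.self_mem_adjoin_singleton K a⟩
  have := IsArtinianRing.of_finite K (Algebra.adjoin K {a})
  have ha' : IsUnit a' := IsArtinianRing.isUnit_of_mem_nonZeroDivisors <|
    mem_nonZeroDivisors_of_injective (f := (Algebra.adjoin K {a}).subtype)
      Subtype.val_injective ha.mem_nonZeroDivisors
  obtain ⟨r, hr⟩ := isSquare_of_isUnit (K := K) ha'
  exact ⟨r, r.2, congrArg Subtype.val hr.symm⟩

end SquareRoots

/-! ### Orthogonal groups -/

section OrthogonalGroup

attribute [local instance] starRingOfComm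

variable {n R : Type*} [Fintype n] [DecidableEq n] [CommRing R]

theorem isSymm_of_mem_adjoin {M N : Matrix n n R} (hM : M.IsSymm)
    (hN : N ∈ Algebra.adjoin R {M}) : N.IsSymm := by
  induction hN using Algebra.adjoin_induction with
  | mem x hx => exact hx ▸ hM
  | algebraMap r => simp [Matrix.algebraMap_eq_diagonal]
  | add x y _ _ hx hy => exact hx.add hy
  | mul x y hx_mem hy_mem hx hy =>
    have hxy : Commute x y := congrArg Subtype.val
      (mul_comm (⟨x, hx_mem⟩ : Algebra.adjoin R {M}) ⟨y, hy_mem⟩)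
    rw [Matrix.IsSymm, transpose_mul, hx.eq, hy.eq, hxy.eq]

theorem commute_transpose_mul_self {A O P : Matrix n n R} (hO : O ∈ orthogonalGroup n R)
    (hP : P ∈ orthogonalGroup n R) (h : A * O = P * A) : Commute O (Aᵀ * A) := by
  have hO' : O * Oᵀ = 1 := (mem_orthogonalGroup_iff _ _).1 hO
  have hP' : Pᵀ * P = 1 := (mem_orthogonalGroup_iff' _ _).1 hP
  have hinv : Oᵀ * (Aᵀ * A) * O = Aᵀ * A :=
    calc Oᵀ * (Aᵀ * A) * O = (A * O)ᵀ * (A * O) := by simp only [transpose_mul, mul_assoc]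
      _ = Aᵀ * (Pᵀ * P) * A := by simp only [h, transpose_mul, mul_assoc]
      _ = Aᵀ * A := by rw [hP', mul_one]
  calc O * (Aᵀ * A) = O * (Oᵀ * (Aᵀ * A) * O) := by rw [hinv]
    _ = Aᵀ * A * O := by rw [← mul_assoc, ← mul_assoc, hO', one_mul]

theorem exists_orthogonal_conj_of_trace_eq {K G : Type*} [Field K] [IsAlgClosed K]
    [CharZero K] [Group G] [Finite G] (φ ψ : G →* orthogonalGroup n K)
    (h : ∀ g, (φ g : Matrix n n K).trace = (ψ g : Matrix n n K).trace) :
    ∃ s : orthogonalGroup n K, ∀ g, s * φ g = ψ g * s := by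
  obtain ⟨A, hA⟩ := exists_conj_of_trace_eq ((orthogonalGroup n K).subtype.comp φ)
    ((orthogonalGroup n K).subtype.comp ψ) h
  have hS : IsUnit ((A : Matrix n n K)ᵀ * A) := ((isUnit_transpose _).2 A.isUnit).mul A.isUnit
  obtain ⟨Q, hQ_mem, hQ⟩ := exists_mem_adjoin_mul_self_eq (K := K) hS
  have hQ_symm : Qᵀ = Q := isSymm_of_mem_adjoin (isSymm_transpose_mul_self _) hQ_mem
  have hQ_comm (g : G) : Commute (φ g : Matrix n n K) Q :=
    Algebra.commute_of_mem_adjoin_singleton_of_commute hQ_mem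
      (commute_transpose_mul_self (φ g).2 (ψ g).2 (hA g))
  lift Q to (Matrix n n K)ˣ using isUnit_of_mul_isUnit_left (hQ ▸ hS)
  have hs : (A * Q⁻¹ : Matrix n n K)ᵀ * (A * Q⁻¹) = 1 := by
    have hQ_inv_symm : (↑Q⁻¹ : Matrix n n K)ᵀ = ↑Q⁻¹ := by
      rw [coe_units_inv, transpose_nonsing_inv, hQ_symm]
    rw [transpose_mul, hQ_inv_symm, mul_assoc, ← mul_assoc _ (A : Matrix n n K), ← hQ, mul_assoc,
      Q.mul_inv, mul_one, Q.inv_mul]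
  refine ⟨⟨A * Q⁻¹, (mem_orthogonalGroup_iff' _ _).2 hs⟩, fun g ↦ Subtype.ext ?_⟩
  calc (A * Q⁻¹ : Matrix n n K) * φ g = A * φ g * Q⁻¹ := by
        rw [mul_assoc, ← (hQ_comm g).units_inv_right.eq, mul_assoc]
    _ = ψ g * (A * Q⁻¹) := by rw [← mul_assoc]; exact congrArg (· * _) (hA g)

theorem det_eq_one_or_eq_neg_one_of_mem_orthogonalGroup [NoZeroDivisors R] {s : Matrix n n R}
    (hs : s ∈ orthogonalGroup n R) :
    s.det = 1 ∨ s.det = -1 := by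
  have h := congrArg det ((mem_orthogonalGroup_iff _ _).1 hs : s * sᵀ = 1)
  rw [det_mul, det_transpose, det_one] at h
  exact mul_self_eq_one_iff.1 h

theorem eq_mul_mul_transpose_of_mul_eq {s A B : Matrix n n R} (hs : s ∈ orthogonalGroup n R)
    (h : s * A = B * s) : B = s * A * sᵀ := by
  have hs' : s * sᵀ = 1 := (mem_orthogonalGroup_iff _ _).1 hs
  rw [h, mul_assoc, hs', mul_one]

theorem trace_eq_of_isConj {g h : specialOrthogonalGroup n R} (hgh : IsConj g h) :
    g.1.trace = h.1.trace := by
  obtain ⟨c, rfl⟩ := isConj_iff.1 hgh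
  have hc : c.1ᵀ * c.1 = 1 := congrArg Subtype.val (inv_mul_cancel c)
  change _ = (c.1 * g.1 * c.1ᵀ).trace
  rw [trace_mul_cycle, hc, one_mul]

theorem coe_inv_specialOrthogonalGroup (g : specialOrthogonalGroup n R) : (g⁻¹).1 = g.1⁻¹ :=
  (inv_eq_right_inv (congrArg Subtype.val (mul_inv_cancel g))).symm

theorem mulVec_dotProduct_mulVec_of_mem_orthogonalGroup {O : Matrix n n R}
    (hO : O ∈ orthogonalGroup n R) (x y : n → R) :
    (O *ᵥ x) ⬝ᵥ (O *ᵥ y) = x ⬝ᵥ y := by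
  have hO' : Oᵀ * O = 1 := (mem_orthogonalGroup_iff' _ _).1 hO
  rw [dotProduct_mulVec, ← mulVec_transpose, mulVec_mulVec, hO', one_mulVec]

theorem sum_map_mulVec_mul_map_mulVec {A : Type*} [Ring A] [Algebra R A]
    (f h : (n → R) →ₗ[R] A) {O : Matrix n n R} (hO : O ∈ orthogonalGroup n R) :
    ∑ b, f (O *ᵥ Pi.single b 1) * h (O *ᵥ Pi.single b 1) =
      ∑ b, f (Pi.single b 1) * h (Pi.single b 1) := by
  have hexp (f : (n → R) →ₗ[R] A) (b : n) :
      f (O *ᵥ Pi.single b 1) = ∑ a, O a b • f (Pi.single a 1) := by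
    conv_lhs => rw [mulVec_single_one, pi_eq_sum_univ' (O.col b), map_sum]
    exact Finset.sum_congr rfl fun a _ ↦ map_smul f _ _
  have hrow (a c : n) : ∑ b, O a b * O c b = (1 : Matrix n n R) a c := by
    rw [← (mem_orthogonalGroup_iff _ _).1 hO, mul_apply]
    rfl
  calc ∑ b, f (O *ᵥ Pi.single b 1) * h (O *ᵥ Pi.single b 1)
      = ∑ b, ∑ a, ∑ c, (O a b * O c b) • (f (Pi.single a 1) * h (Pi.single c 1)) := by
        simp only [hexp, Finset.sum_mul_sum, smul_mul_smul_comm]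
    _ = ∑ a, ∑ c, (∑ b, O a b * O c b) • (f (Pi.single a 1) * h (Pi.single c 1)) := by
        rw [Finset.sum_comm]
        refine Finset.sum_congr rfl fun a _ ↦ ?_
        rw [Finset.sum_comm]
        simp only [Finset.sum_smul]
    _ = _ := by simp [hrow, one_apply]

theorem mulVec_cross_mulVec (M : Matrix (Fin 3) (Fin 3) R) (x y : Fin 3 → R) :
    (M *ᵥ x) ⨯₃ (M *ᵥ y) = M.adjugateᵀ *ᵥ (x ⨯₃ y) := by
  rw [adjugate_fin_three]
  ext i
  fin_cases i <;> simp [cross_apply, mulVec, dotProduct, Fin.sum_univ_succ] <;> ring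

theorem adjugate_of_mem_specialOrthogonalGroup {M : Matrix n n R}
    (hM : M ∈ specialOrthogonalGroup n R) : M.adjugate = Mᵀ := by
  obtain ⟨hO, hdet⟩ := mem_specialOrthogonalGroup_iff.1 hM
  have hO' : Mᵀ * M = 1 := (mem_orthogonalGroup_iff' _ _).1 hO
  rw [← one_mul M.adjugate, ← hO', mul_assoc, mul_adjugate, hdet, one_smul, mul_one]

theorem mulVec_cross_mulVec_of_mem_specialOrthogonalGroup
    {T : Matrix (Fin 3) (Fin 3) R} (hT : T ∈ specialOrthogonalGroup (Fin 3) R)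
    (x y : Fin 3 → R) : (T *ᵥ x) ⨯₃ (T *ᵥ y) = T *ᵥ (x ⨯₃ y) := by
  rw [mulVec_cross_mulVec, adjugate_of_mem_specialOrthogonalGroup hT, transpose_transpose]

end OrthogonalGroup

/-! ### Self-dual and anti-self-dual skew-symmetric 4 × 4 matrices -/

section Isoclinic

attribute [local instance] starRingOfComm

variable {K : Type*} [Field K]

/-- The Pfaffian of a skew-symmetric `4 × 4` matrix, in terms of the entries above the diagonal. -/
def pfaffianFour (M : Matrix (Fin 4) (Fin 4) K) : K :=
  M 0 1 * M 2 3 - M 0 2 * M 1 3 + M 0 3 * M 1 2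

/-- The matrix on `K⁴`, viewed as the quaternions, of left (`ε = 1`) or right (`ε = -1`)
multiplication by the imaginary quaternion with coordinates `x`. As `x` varies, these are the
self-dual, respectively anti-self-dual, skew-symmetric matrices. -/
def isoclinic (ε : ℤˣ) : (Fin 3 → K) →ₗ[K] Matrix (Fin 4) (Fin 4) K where
  toFun x :=
    !![0, -x 0, -x 1, -x 2;
      x 0, 0, -(ε : ℤ) * x 2, (ε : ℤ) * x 1;
      x 1, (ε : ℤ) * x 2, 0, -(ε : ℤ) * x 0;
      x 2, -(ε : ℤ) * x 1, (ε : ℤ) * x 0, 0]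
  map_add' x y := by
    ext i j
    fin_cases i <;> fin_cases j <;> simp <;> ring
  map_smul' r x := by
    ext i j
    fin_cases i <;> fin_cases j <;> simp <;> ring

theorem transpose_isoclinic (ε : ℤˣ) (x : Fin 3 → K) : (isoclinic ε x)ᵀ = -isoclinic ε x := by
  ext i j
  fin_cases i <;> fin_cases j <;> simp [isoclinic]

theorem transpose_conj_eq_neg {n R : Type*} [Fintype n] [CommRing R] {M : Matrix n n R}
    (hM : Mᵀ = -M) (g : Matrix n n R) : (g * M * gᵀ)ᵀ = -(g * M * gᵀ) := by
  rw [transpose_mul, transpose_mul, transpose_transpose, hM, ← mul_assoc, mul_neg, neg_mul]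

theorem isoclinic_mul_isoclinic (ε : ℤˣ) (x y : Fin 3 → K) :
    isoclinic ε x * isoclinic ε y = -(x ⬝ᵥ y) • 1 + ((ε : ℤ) : K) • isoclinic ε (x ⨯₃ y) := by
  rcases Int.units_eq_one_or ε with rfl | rfl <;> ext i j <;> fin_cases i <;> fin_cases j <;>
    simp [isoclinic, mul_apply, Fin.sum_univ_succ, cross_apply, dotProduct] <;> ring

theorem commute_isoclinic (x y : Fin 3 → K) :
    Commute (isoclinic 1 x) (isoclinic (-1) y) := by
  ext i j
  fin_cases i <;> fin_cases j <;>
    simp [isoclinic, mul_apply, Fin.sum_univ_succ] <;> ring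

theorem pfaffianFour_isoclinic (ε : ℤˣ) (x : Fin 3 → K) :
    pfaffianFour (isoclinic ε x) = (ε : ℤ) * (x ⬝ᵥ x) := by
  simp [isoclinic, pfaffianFour, Fin.sum_univ_succ, dotProduct]
  ring

/-- The coordinates of the component of a skew-symmetric matrix in the range of `isoclinic ε`. -/
def isoclinicPart (ε : ℤˣ) : Matrix (Fin 4) (Fin 4) K →ₗ[K] (Fin 3 → K) where
  toFun M := (2⁻¹ : K) •
    ![M 1 0 + (ε : ℤ) * M 3 2, M 2 0 + (ε : ℤ) * M 1 3, M 3 0 + (ε : ℤ) * M 2 1]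
  map_add' M N := by
    ext i
    fin_cases i <;> simp <;> ring
  map_smul' r M := by
    ext i
    fin_cases i <;> simp <;> ring

/-- The matrix of `X ↦ g * X * gᵀ` on the range of `isoclinic ε`, in the coordinates given by
`isoclinic ε`. -/
def isoclinicMatrix (ε : ℤˣ) (g : Matrix (Fin 4) (Fin 4) K) : Matrix (Fin 3) (Fin 3) K :=
  LinearMap.toMatrix' (isoclinicPart ε ∘ₗ LinearMap.mulRight K gᵀ ∘ₗ LinearMap.mulLeft K g ∘ₗ
    isoclinic ε)

theorem isoclinicMatrix_mulVec (ε : ℤˣ) (g : Matrix (Fin 4) (Fin 4) K) (x : Fin 3 → K) :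
    isoclinicMatrix ε g *ᵥ x = isoclinicPart ε (g * isoclinic ε x * gᵀ) :=
  LinearMap.toMatrix'_mulVec _ x

variable [NeZero (2 : K)]

theorem exists_eq_of_transpose_eq_neg {M : Matrix (Fin 4) (Fin 4) K} (hM : Mᵀ = -M) :
    ∃ a b c d e f, M = !![0, a, b, c; -a, 0, d, e; -b, -d, 0, f; -c, -e, -f, 0] := by
  have hentry (i j : Fin 4) : M j i = -M i j := congrFun (congrFun hM i) j
  have hdiag (i : Fin 4) : M i i = 0 := by
    have := hentry i i
    rw [eq_neg_iff_add_eq_zero, ← two_mul] at this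
    exact (mul_eq_zero_iff_left two_ne_zero).1 this
  refine ⟨M 0 1, M 0 2, M 0 3, M 1 2, M 1 3, M 2 3, ?_⟩
  ext i j
  fin_cases i <;> fin_cases j <;>
    first | exact hdiag _ | exact hentry _ _ | rfl

theorem pfaffianFour_conj {M : Matrix (Fin 4) (Fin 4) K} (hM : Mᵀ = -M)
    (g : Matrix (Fin 4) (Fin 4) K) :
    pfaffianFour (g * M * gᵀ) = g.det * pfaffianFour M := by
  obtain ⟨a, b, c, d, e, f, rfl⟩ := exists_eq_of_transpose_eq_neg hM
  simp [pfaffianFour, det_succ_row_zero, Fin.sum_univ_succ, mul_apply, Fin.succAbove]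
  ring

theorem polar_pfaffianFour_conj {M N : Matrix (Fin 4) (Fin 4) K} (hM : Mᵀ = -M) (hN : Nᵀ = -N)
    {g : Matrix (Fin 4) (Fin 4) K} (hg : g.det = 1) :
    QuadraticMap.polar pfaffianFour (g * M * gᵀ) (g * N * gᵀ) =
      QuadraticMap.polar pfaffianFour M N := by
  have hMN : (M + N)ᵀ = -(M + N) := by rw [transpose_add, hM, hN, neg_add]
  simp only [QuadraticMap.polar, ← add_mul, ← mul_add, pfaffianFour_conj, hM, hN, hMN, hg, one_mul]

theorem pfaffianFour_sub_transpose_conj (s g : Matrix (Fin 4) (Fin 4) K) :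
    pfaffianFour (s * g * sᵀ - (s * g * sᵀ)ᵀ) = s.det * pfaffianFour (g - gᵀ) := by
  have hskew : (g - gᵀ)ᵀ = -(g - gᵀ) := by rw [transpose_sub, transpose_transpose, neg_sub]
  rw [← pfaffianFour_conj hskew, mul_sub, sub_mul]
  simp only [transpose_mul, transpose_transpose, mul_assoc]

theorem pfaffianFour_sub_transpose_eq_of_isConj {g h : specialOrthogonalGroup (Fin 4) K}
    (hgh : IsConj g h) : pfaffianFour (h.1 - h.1ᵀ) = pfaffianFour (g.1 - g.1ᵀ) := by
  obtain ⟨c, hc⟩ := isConj_iff.1 hgh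
  have hc' : h.1 = c.1 * g.1 * c.1ᵀ := congrArg Subtype.val hc.symm
  rw [hc', pfaffianFour_sub_transpose_conj, (mem_specialOrthogonalGroup_iff.1 c.2).2, one_mul]

theorem isoclinicPart_isoclinic (ε : ℤˣ) (x : Fin 3 → K) :
    isoclinicPart ε (isoclinic ε x) = x := by
  have h2 : (2 : K) ≠ 0 := two_ne_zero
  ext i
  rcases Int.units_eq_one_or ε with rfl | rfl <;> fin_cases i <;>
  · simp [isoclinicPart, isoclinic]
    field_simp
    ring

theorem isoclinic_injective (ε : ℤˣ) : Function.Injective (isoclinic (K := K) ε) :=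
  Function.LeftInverse.injective (isoclinicPart_isoclinic ε)

theorem isoclinic_add_isoclinic {M : Matrix (Fin 4) (Fin 4) K} (hM : Mᵀ = -M) (ε : ℤˣ) :
    isoclinic ε (isoclinicPart ε M) + isoclinic (-ε) (isoclinicPart (-ε) M) = M := by
  obtain ⟨a, b, c, d, e, f, rfl⟩ := exists_eq_of_transpose_eq_neg hM
  have h2 : (2 : K) ≠ 0 := two_ne_zero
  ext i j
  rcases Int.units_eq_one_or ε with rfl | rfl <;> fin_cases i <;> fin_cases j <;>
    simp [isoclinicPart, isoclinic] <;> field_simp <;> ring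

theorem trace_isoclinic_mul_eq_polar (ε : ℤˣ) (x : Fin 3 → K) {M : Matrix (Fin 4) (Fin 4) K}
    (hM : Mᵀ = -M) :
    (isoclinic ε x * M).trace = -2 * (ε : ℤ) *
      QuadraticMap.polar pfaffianFour (isoclinic ε x) M := by
  obtain ⟨a, b, c, d, e, f, rfl⟩ := exists_eq_of_transpose_eq_neg hM
  rcases Int.units_eq_one_or ε with rfl | rfl <;>
  · simp [QuadraticMap.polar, isoclinic, pfaffianFour, trace, Fin.sum_univ_succ]
    ring

theorem trace_isoclinic_mul_eq_dotProduct (ε : ℤˣ) (x : Fin 3 → K) {M : Matrix (Fin 4) (Fin 4) K}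
    (hM : Mᵀ = -M) : (isoclinic ε x * M).trace = -4 * (x ⬝ᵥ isoclinicPart ε M) := by
  obtain ⟨a, b, c, d, e, f, rfl⟩ := exists_eq_of_transpose_eq_neg hM
  have h2 : (2 : K) ≠ 0 := two_ne_zero
  rcases Int.units_eq_one_or ε with rfl | rfl <;>
  · simp [isoclinicPart, isoclinic, trace, Fin.sum_univ_succ, dotProduct]
    field_simp
    ring

/- Conjugation by `g` preserves both the trace form and the Pfaffian form on skew-symmetric
matrices, and these two forms are proportional with opposite signs on the two isoclinic parts. -/
theorem trace_isoclinic_neg_mul_conj (ε : ℤˣ) (x y : Fin 3 → K) {g : Matrix (Fin 4) (Fin 4) K}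
    (hg : g ∈ specialOrthogonalGroup (Fin 4) K) :
    (isoclinic (-ε) y * (g * isoclinic ε x * gᵀ)).trace = 0 := by
  obtain ⟨hg, hdet⟩ := mem_specialOrthogonalGroup_iff.1 hg
  have hx := transpose_isoclinic ε x
  have hy := transpose_isoclinic (-ε) y
  set X := isoclinic ε x
  set Y := isoclinic (-ε) y
  have hY : Y = g * (gᵀ * Y * g) * gᵀ := by
    have := (mem_orthogonalGroup_iff _ _).1 hg
    rw [← mul_assoc, ← mul_assoc, this, one_mul, mul_assoc, this, mul_one]
  have hY' : (gᵀ * Y * g)ᵀ = -(gᵀ * Y * g) := by simpa using transpose_conj_eq_neg hy gᵀ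
  have htrace : (Y * (g * X * gᵀ)).trace = (X * (gᵀ * Y * g)).trace := by
    rw [trace_mul_comm, mul_assoc, mul_assoc, trace_mul_comm]
    simp only [mul_assoc]
  have hpolar : QuadraticMap.polar pfaffianFour Y (g * X * gᵀ) =
      QuadraticMap.polar pfaffianFour X (gᵀ * Y * g) := by
    conv_lhs => rw [hY]
    rw [polar_pfaffianFour_conj hY' hx hdet, QuadraticMap.polar_comm]
  have h₁ := trace_isoclinic_mul_eq_polar (-ε) y (transpose_conj_eq_neg hx g)
  have h₂ := trace_isoclinic_mul_eq_polar ε x hY'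
  have : (2 : K) * (Y * (g * X * gᵀ)).trace = 0 := by
    rw [two_mul]
    nth_rewrite 2 [htrace]
    rw [h₁, h₂, hpolar]
    push_cast
    ring
  exact (mul_eq_zero_iff_left two_ne_zero).1 this

theorem four_ne_zero_of_two_ne_zero : (4 : K) ≠ 0 := by
  simpa [← two_add_two_eq_four, ← two_mul] using NeZero.ne (2 : K)

theorem isoclinicPart_neg_conj (ε : ℤˣ) (x : Fin 3 → K) {g : Matrix (Fin 4) (Fin 4) K}
    (hg : g ∈ specialOrthogonalGroup (Fin 4) K) :
    isoclinicPart (-ε) (g * isoclinic ε x * gᵀ) = 0 := by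
  refine dotProduct_eq_zero _ fun y ↦ ?_
  have h4 : (-4 : K) ≠ 0 := neg_ne_zero.2 four_ne_zero_of_two_ne_zero
  have h := trace_isoclinic_neg_mul_conj ε x y hg
  rw [trace_isoclinic_mul_eq_dotProduct (-ε) y
    (transpose_conj_eq_neg (transpose_isoclinic ε x) _)] at h
  rw [dotProduct_comm]
  exact (mul_eq_zero_iff_left h4).1 h

theorem isoclinic_isoclinicMatrix_mulVec (ε : ℤˣ) (x : Fin 3 → K) {g : Matrix (Fin 4) (Fin 4) K}
    (hg : g ∈ specialOrthogonalGroup (Fin 4) K) :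
    isoclinic ε (isoclinicMatrix ε g *ᵥ x) = g * isoclinic ε x * gᵀ := by
  have h := isoclinic_add_isoclinic (transpose_conj_eq_neg (transpose_isoclinic ε x) g) ε
  rwa [isoclinicPart_neg_conj ε x hg, map_zero, add_zero, ← isoclinicMatrix_mulVec] at h

theorem isoclinicMatrix_one (ε : ℤˣ) : isoclinicMatrix (K := K) ε 1 = 1 :=
  ext_of_mulVec_single fun i ↦ by
    rw [isoclinicMatrix_mulVec, transpose_one, mul_one, one_mul, isoclinicPart_isoclinic,
      one_mulVec]

theorem isoclinicMatrix_mul (ε : ℤˣ) {g h : Matrix (Fin 4) (Fin 4) K}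
    (hg : g ∈ specialOrthogonalGroup (Fin 4) K) (hh : h ∈ specialOrthogonalGroup (Fin 4) K) :
    isoclinicMatrix ε (g * h) = isoclinicMatrix ε g * isoclinicMatrix ε h :=
  ext_of_mulVec_single fun i ↦ isoclinic_injective ε <| by
    rw [← mulVec_mulVec, isoclinic_isoclinicMatrix_mulVec ε _ hg,
      isoclinic_isoclinicMatrix_mulVec ε _ hh, isoclinic_isoclinicMatrix_mulVec ε _ (mul_mem hg hh),
      transpose_mul]
    simp only [mul_assoc]

theorem isoclinicMatrix_transpose (ε : ℤˣ) (g : Matrix (Fin 4) (Fin 4) K) :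
    isoclinicMatrix ε gᵀ = (isoclinicMatrix ε g)ᵀ := by
  have h4 : (-4 : K) ≠ 0 := neg_ne_zero.2 four_ne_zero_of_two_ne_zero
  have hpair (g : Matrix (Fin 4) (Fin 4) K) (x y : Fin 3 → K) :
      (isoclinic ε x * (g * isoclinic ε y * gᵀ)).trace = -4 * (x ⬝ᵥ isoclinicMatrix ε g *ᵥ y) := by
    rw [trace_isoclinic_mul_eq_dotProduct ε x (transpose_conj_eq_neg (transpose_isoclinic ε y) g),
      isoclinicMatrix_mulVec]
  have hadj (x y : Fin 3 → K) : x ⬝ᵥ isoclinicMatrix ε gᵀ *ᵥ y = y ⬝ᵥ isoclinicMatrix ε g *ᵥ x := by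
    refine mul_left_cancel₀ h4 ?_
    rw [← hpair, ← hpair, transpose_transpose, trace_mul_comm (isoclinic ε y), ← mul_assoc,
      ← mul_assoc, trace_mul_cycle]
    simp only [mul_assoc]
  ext i j
  simpa using hadj (Pi.single i 1) (Pi.single j 1)

theorem isoclinicMatrix_mem_orthogonalGroup (ε : ℤˣ) {g : Matrix (Fin 4) (Fin 4) K}
    (hg : g ∈ specialOrthogonalGroup (Fin 4) K) :
    isoclinicMatrix ε g ∈ orthogonalGroup (Fin 3) K := by
  have hgt : gᵀ ∈ specialOrthogonalGroup (Fin 4) K :=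
    (⟨g, hg⟩⁻¹ : specialOrthogonalGroup (Fin 4) K).2
  rw [mem_orthogonalGroup_iff, ← isoclinicMatrix_transpose, ← isoclinicMatrix_mul ε hg hgt,
    (mem_orthogonalGroup_iff _ _).1 (specialUnitaryGroup_le_unitaryGroup hg), isoclinicMatrix_one]

/-- The representation of `SO₄` on the self-dual (`ε = 1`) or anti-self-dual (`ε = -1`)
skew-symmetric matrices. -/
def isoclinicHom (ε : ℤˣ) : specialOrthogonalGroup (Fin 4) K →* orthogonalGroup (Fin 3) K where
  toFun g := ⟨isoclinicMatrix ε g, isoclinicMatrix_mem_orthogonalGroup ε g.2⟩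
  map_one' := Subtype.ext (isoclinicMatrix_one ε)
  map_mul' g h := Subtype.ext (isoclinicMatrix_mul ε g.2 h.2)

theorem trace_isoclinicMatrix_one_sub_trace_isoclinicMatrix_neg_one
    (g : Matrix (Fin 4) (Fin 4) K) :
    (isoclinicMatrix 1 g).trace - (isoclinicMatrix (-1) g).trace = -pfaffianFour (g - gᵀ) := by
  have h2 : (2 : K) ≠ 0 := two_ne_zero
  simp [isoclinicMatrix, trace, Fin.sum_univ_succ, LinearMap.toMatrix'_apply,
    isoclinicPart, isoclinic, mul_apply, pfaffianFour]
  field_simp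
  ring

end Isoclinic

/-! ### Twisted quaternion conjugation -/

section QuaternionSwap

variable {R A : Type*} [CommRing R] [Ring A] [Algebra R A]
  {p q : QuaternionAlgebra.Basis A (-1 : R) 0 (-1)}

/-- For commuting quaternion bases `p` and `q`, twice an involution that conjugates `p` into `q`. -/
def quaternionSwap (p q : QuaternionAlgebra.Basis A (-1 : R) 0 (-1)) : A :=
  1 - p.i * q.i - p.j * q.j - p.k * q.k

theorem commute_quaternionBasis_k {a : A} (hi : Commute a q.i) (hj : Commute a q.j) :
    Commute a q.k :=
  q.i_mul_j ▸ hi.mul_right hj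

theorem mul_quaternionSwap : p.i * quaternionSwap p q = quaternionSwap p q * q.i := by
  have hl : p.i * quaternionSwap p q = p.i + q.i - p.k * q.j + p.j * q.k := by
    simp only [quaternionSwap, mul_sub, ← mul_assoc, p.i_mul_i, p.i_mul_j, p.i_mul_k]
    simp
  have hr : quaternionSwap p q * q.i = q.i + p.i + p.j * q.k - p.k * q.j := by
    simp only [quaternionSwap, sub_mul, mul_assoc, q.i_mul_i, q.j_mul_i, q.k_mul_i]
    simp
  rw [hl, hr]
  abel

theorem quaternionSwap_mul_self (hii : Commute p.i q.i) (hij : Commute p.i q.j)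
    (hji : Commute p.j q.i) (hjj : Commute p.j q.j) :
    quaternionSwap p q * quaternionSwap p q = 4 := by
  have hik := commute_quaternionBasis_k hii hij
  have hjk := commute_quaternionBasis_k hji hjj
  have hki : Commute p.k q.i := (commute_quaternionBasis_k hii.symm hji.symm).symm
  have hkj : Commute p.k q.j := (commute_quaternionBasis_k hij.symm hjj.symm).symm
  have hkk := commute_quaternionBasis_k hki hkj
  simp only [quaternionSwap, mul_sub, sub_mul, one_mul, mul_one]
  rw [hii.symm.mul_mul_mul_comm, hij.symm.mul_mul_mul_comm, hik.symm.mul_mul_mul_comm,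
    hji.symm.mul_mul_mul_comm, hjj.symm.mul_mul_mul_comm, hjk.symm.mul_mul_mul_comm,
    hki.symm.mul_mul_mul_comm, hkj.symm.mul_mul_mul_comm, hkk.symm.mul_mul_mul_comm]
  simp only [p.i_mul_i, p.j_mul_j, p.k_mul_k, p.i_mul_j, p.j_mul_i, p.i_mul_k, p.k_mul_i,
    p.j_mul_k, p.k_mul_j, q.i_mul_i, q.j_mul_j, q.k_mul_k, q.i_mul_j, q.j_mul_i, q.i_mul_k,
    q.k_mul_i, q.j_mul_k, q.k_mul_j, neg_smul, one_smul, zero_smul, add_zero, mul_neg, mul_one,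
    neg_neg, zero_sub, neg_mul, neg_zero, sub_neg_eq_add, zero_add]
  noncomm_ring
  norm_num

end QuaternionSwap

section TwistedConj

attribute [local instance] starRingOfComm

variable {K : Type*} [Field K]

theorem smul_isoclinic_mulVec_mul_smul_isoclinic_mulVec (ε : ℤˣ) {T : Matrix (Fin 3) (Fin 3) K}
    (hT : T ∈ specialOrthogonalGroup (Fin 3) K) (x y : Fin 3 → K) :
    (((ε : ℤ) : K) • isoclinic ε (T *ᵥ x)) * (((ε : ℤ) : K) • isoclinic ε (T *ᵥ y)) =
      -(x ⬝ᵥ y) • 1 + ((ε : ℤ) : K) • isoclinic ε (T *ᵥ (x ⨯₃ y)) := by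
  have hε : ((ε : ℤ) : K) * (ε : ℤ) = 1 := by
    rw [← Int.cast_mul, Int.units_coe_mul_self, Int.cast_one]
  rw [smul_mul_smul_comm, hε, one_smul, isoclinic_mul_isoclinic,
    mulVec_dotProduct_mulVec_of_mem_orthogonalGroup (specialUnitaryGroup_le_unitaryGroup hT),
    mulVec_cross_mulVec_of_mem_specialOrthogonalGroup hT]

theorem single_zero_cross_single_one :
    Pi.single 0 1 ⨯₃ Pi.single 1 1 = (Pi.single 2 1 : Fin 3 → K) := by
  ext i
  fin_cases i <;> simp [cross_apply]

/-- The quaternion basis formed by the isoclinic matrices of the columns of `T`. Right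
multiplication reverses products, hence the factor `ε`. -/
def isoclinicBasis (ε : ℤˣ) (T : specialOrthogonalGroup (Fin 3) K) :
    QuaternionAlgebra.Basis (Matrix (Fin 4) (Fin 4) K) (-1 : K) 0 (-1) where
  i := ((ε : ℤ) : K) • isoclinic ε (T.1 *ᵥ Pi.single 0 1)
  j := ((ε : ℤ) : K) • isoclinic ε (T.1 *ᵥ Pi.single 1 1)
  k := ((ε : ℤ) : K) • isoclinic ε (T.1 *ᵥ Pi.single 2 1)
  i_mul_i := by
    rw [smul_isoclinic_mulVec_mul_smul_isoclinic_mulVec ε T.2]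
    simp
  j_mul_j := by
    rw [smul_isoclinic_mulVec_mul_smul_isoclinic_mulVec ε T.2]
    simp
  i_mul_j := by
    rw [smul_isoclinic_mulVec_mul_smul_isoclinic_mulVec ε T.2, single_zero_cross_single_one]
    simp
  j_mul_i := by
    rw [smul_isoclinic_mulVec_mul_smul_isoclinic_mulVec ε T.2,
      ← cross_anticomm, single_zero_cross_single_one, mulVec_neg, map_neg]
    simp

theorem quaternionSwap_isoclinicBasis (T : specialOrthogonalGroup (Fin 3) K) :
    quaternionSwap (isoclinicBasis 1 T) (isoclinicBasis (-1) 1) =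
      1 + ∑ b, isoclinic 1 (T.1 *ᵥ Pi.single b 1) * isoclinic (-1) (Pi.single b 1) := by
  simp [quaternionSwap, isoclinicBasis, Fin.sum_univ_three, -mulVec_single, add_assoc]

/-- The endomorphism `v ↦ (v + ∑ b, T(e_b) v e_b) / 2` of the quaternions; for `T = 1` it is minus
the quaternion conjugation. -/
def twistedConj (T : specialOrthogonalGroup (Fin 3) K) : Matrix (Fin 4) (Fin 4) K :=
  (2⁻¹ : K) • quaternionSwap (isoclinicBasis 1 T) (isoclinicBasis (-1) 1)

theorem transpose_twistedConj (T : specialOrthogonalGroup (Fin 3) K) :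
    (twistedConj T)ᵀ = twistedConj T := by
  simp only [twistedConj, quaternionSwap_isoclinicBasis, transpose_smul, transpose_add,
    transpose_one, transpose_sum, transpose_mul, transpose_isoclinic, neg_mul_neg,
    (commute_isoclinic _ _).eq]

theorem twistedConj_mul_self [NeZero (2 : K)] (T : specialOrthogonalGroup (Fin 3) K) :
    twistedConj T * twistedConj T = 1 := by
  have hcomm (x y : Fin 3 → K) : Commute ((((1 : ℤˣ) : ℤ) : K) • isoclinic 1 x)
      ((((-1 : ℤˣ) : ℤ) : K) • isoclinic (-1) y) :=
    ((commute_isoclinic x y).smul_left _).smul_right _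
  have h4 : (2⁻¹ * 2⁻¹ * 4 : K) = 1 := by
    rw [← two_add_two_eq_four, mul_assoc, ← two_mul, inv_mul_cancel_left₀ two_ne_zero,
      inv_mul_cancel₀ two_ne_zero]
  rw [twistedConj, smul_mul_smul_comm,
    quaternionSwap_mul_self (hcomm _ _) (hcomm _ _) (hcomm _ _) (hcomm _ _),
    ← map_ofNat (algebraMap K (Matrix (Fin 4) (Fin 4) K)) 4,
    Algebra.algebraMap_eq_smul_one, smul_smul, h4, one_smul]

theorem twistedConj_mem_orthogonalGroup [NeZero (2 : K)] (T : specialOrthogonalGroup (Fin 3) K) :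
    twistedConj T ∈ orthogonalGroup (Fin 4) K := by
  have h : twistedConj T * (twistedConj T)ᵀ = 1 := by
    rw [transpose_twistedConj, twistedConj_mul_self]
  exact (mem_orthogonalGroup_iff _ _).2 h

theorem det_twistedConj [NeZero (2 : K)] (T : specialOrthogonalGroup (Fin 3) K) :
    (twistedConj T).det = -1 := by
  set e : Fin 3 → K := Pi.single 0 1
  have hT : T.1 ∈ orthogonalGroup (Fin 3) K := specialUnitaryGroup_le_unitaryGroup T.2
  have hswap : isoclinic 1 (T.1 *ᵥ e) * twistedConj T = -(twistedConj T * isoclinic (-1) e) := by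
    have h := mul_quaternionSwap (p := isoclinicBasis 1 T) (q := isoclinicBasis (-1) 1)
    have hp : (isoclinicBasis 1 T).i = isoclinic 1 (T.1 *ᵥ e) := by simp [isoclinicBasis, e]
    have hq : (isoclinicBasis (-1) 1).i = -isoclinic (-1) e := by
      simp [isoclinicBasis, e, -mulVec_single]
    rw [twistedConj, mul_smul_comm, smul_mul_assoc, ← smul_neg, ← mul_neg, ← hp, ← hq, h]
  have hconj : twistedConj T * isoclinic (-1) e * (twistedConj T)ᵀ = -isoclinic 1 (T.1 *ᵥ e) := by
    rw [transpose_twistedConj, ← neg_eq_iff_eq_neg, ← neg_mul, ← hswap, mul_assoc,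
      twistedConj_mul_self, mul_one]
  have hpf := congrArg pfaffianFour hconj
  rw [pfaffianFour_conj (transpose_isoclinic _ _), ← map_neg, pfaffianFour_isoclinic,
    pfaffianFour_isoclinic, neg_dotProduct_neg,
    mulVec_dotProduct_mulVec_of_mem_orthogonalGroup hT] at hpf
  have he : e ⬝ᵥ e = 1 := by simp [e]
  simpa [he, neg_eq_iff_eq_neg] using hpf

theorem commute_twistedConj [NeZero (2 : K)] {T : specialOrthogonalGroup (Fin 3) K}
    {g : Matrix (Fin 4) (Fin 4) K} (hg : g ∈ specialOrthogonalGroup (Fin 4) K)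
    (h : T.1 * isoclinicMatrix (-1) g = isoclinicMatrix 1 g * T.1) :
    Commute (twistedConj T) g := by
  have hg₁ : gᵀ * g = 1 := (mem_orthogonalGroup_iff' _ _).1 (specialUnitaryGroup_le_unitaryGroup hg)
  have hg₂ : g * gᵀ = 1 := (mem_orthogonalGroup_iff _ _).1 (specialUnitaryGroup_le_unitaryGroup hg)
  have hconj_mul (A B : Matrix (Fin 4) (Fin 4) K) :
      g * (A * B) * gᵀ = g * A * gᵀ * (g * B * gᵀ) := by
    rw [mul_assoc (g * A), ← mul_assoc gᵀ, ← mul_assoc gᵀ, hg₁, one_mul]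
    simp only [mul_assoc]
  have hconj_sum : ∑ b, g * (isoclinic 1 (T.1 *ᵥ Pi.single b 1) * isoclinic (-1) (Pi.single b 1)) *
      gᵀ = ∑ b, isoclinic 1 (T.1 *ᵥ Pi.single b 1) * isoclinic (-1) (Pi.single b 1) := by
    refine Eq.trans (Finset.sum_congr rfl fun b _ ↦ ?_)
      (sum_map_mulVec_mul_map_mulVec (isoclinic 1 ∘ₗ T.1.mulVecLin) (isoclinic (-1))
        (isoclinicMatrix_mem_orthogonalGroup (-1) hg))
    rw [hconj_mul, ← isoclinic_isoclinicMatrix_mulVec _ _ hg,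
      ← isoclinic_isoclinicMatrix_mulVec _ _ hg, mulVec_mulVec, ← h, LinearMap.comp_apply,
      mulVecLin_apply, mulVec_mulVec]
  have hfix : g * twistedConj T * gᵀ = twistedConj T := by
    simp only [twistedConj, quaternionSwap_isoclinicBasis, mul_smul_comm, smul_mul_assoc, mul_add,
      add_mul, mul_one, hg₂, Finset.mul_sum, Finset.sum_mul, hconj_sum]
  calc twistedConj T * g = g * twistedConj T * gᵀ * g := by rw [hfix]
    _ = g * twistedConj T := by rw [mul_assoc, hg₁, mul_one]

variable [IsAlgClosed K] [CharZero K]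

theorem exists_orthogonal_det_eq_neg_one_commute {G : Type*} [Group G] [Finite G]
    (φ : G →* specialOrthogonalGroup (Fin 4) K)
    (h : ∀ g, pfaffianFour ((φ g).1 - (φ g).1ᵀ) = 0) :
    ∃ r ∈ orthogonalGroup (Fin 4) K, r.det = -1 ∧ ∀ g, Commute r (φ g).1 := by
  have htrace (g : G) : (isoclinicMatrix (-1) (φ g).1).trace = (isoclinicMatrix 1 (φ g).1).trace :=
    (sub_eq_zero.1 <| by
      rw [trace_isoclinicMatrix_one_sub_trace_isoclinicMatrix_neg_one, h, neg_zero]).symm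
  obtain ⟨T, hT⟩ := exists_orthogonal_conj_of_trace_eq ((isoclinicHom (-1)).comp φ)
    ((isoclinicHom 1).comp φ) htrace
  replace hT (g : G) : T.1 * isoclinicMatrix (-1) (φ g).1 = isoclinicMatrix 1 (φ g).1 * T.1 :=
    congrArg Subtype.val (hT g)
  obtain ⟨S, hS⟩ : ∃ S : specialOrthogonalGroup (Fin 3) K, ∀ g,
      S.1 * isoclinicMatrix (-1) (φ g).1 = isoclinicMatrix 1 (φ g).1 * S.1 := by
    rcases det_eq_one_or_eq_neg_one_of_mem_orthogonalGroup T.2 with hdet | hdet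
    · exact ⟨⟨T.1, mem_specialOrthogonalGroup_iff.2 ⟨T.2, hdet⟩⟩, hT⟩
    · refine ⟨⟨-T.1, mem_specialOrthogonalGroup_iff.2 ⟨(-T).2, ?_⟩⟩, fun g ↦ ?_⟩
      · rw [det_neg, hdet, Fintype.card_fin]
        norm_num
      · rw [neg_mul, mul_neg, hT]
  exact ⟨twistedConj S, twistedConj_mem_orthogonalGroup S, det_twistedConj S,
    fun g ↦ commute_twistedConj (φ g).2 (hS g)⟩

end TwistedConj

/-! ### Acceptability -/

section Acceptable

attribute [local instance] starRingOfComm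

/-- A group `H` is acceptable if locally conjugate homomorphisms from a finite group into `H` are
globally conjugate. The universe `v` of the finite groups is a parameter. -/
def IsAcceptable.{u, v} (H : Type u) [Group H] : Prop :=
  ∀ (Γ : Type v) [Group Γ] [Finite Γ] (φ φ' : Γ →* H),
    (∀ γ, IsConj (φ γ) (φ' γ)) → ∃ g : H, ∀ γ, φ' γ = g * φ γ * g⁻¹

theorem statement13_general.{u, v} {K : Type u} [Field K] [IsAlgClosed K] [CharZero K] :
    IsAcceptable.{u, v} (specialOrthogonalGroup (Fin 4) K) := by
  intro Γ _ _ φ φ' hloc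
  let ι : specialOrthogonalGroup (Fin 4) K →* orthogonalGroup (Fin 4) K :=
    Submonoid.inclusion specialUnitaryGroup_le_unitaryGroup
  suffices h : ∃ s ∈ orthogonalGroup (Fin 4) K, s.det = 1 ∧ ∀ γ, s * (φ γ).1 = (φ' γ).1 * s by
    obtain ⟨s, hs, hdet, hconj⟩ := h
    exact ⟨⟨s, mem_specialOrthogonalGroup_iff.2 ⟨hs, hdet⟩⟩, fun γ ↦
      eq_mul_inv_of_mul_eq (Subtype.ext (hconj γ).symm)⟩
  obtain ⟨s, hs⟩ := exists_orthogonal_conj_of_trace_eq (ι.comp φ) (ι.comp φ')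
    fun γ ↦ trace_eq_of_isConj (hloc γ)
  replace hs (γ : Γ) : s.1 * (φ γ).1 = (φ' γ).1 * s.1 := congrArg Subtype.val (hs γ)
  rcases det_eq_one_or_eq_neg_one_of_mem_orthogonalGroup s.2 with hdet | hdet
  · exact ⟨s, s.2, hdet, hs⟩
  have hpf (γ : Γ) : pfaffianFour ((φ γ).1 - (φ γ).1ᵀ) = 0 := by
    have h := pfaffianFour_sub_transpose_conj s.1 (φ γ).1
    rw [← eq_mul_mul_transpose_of_mul_eq s.2 (hs γ),
      pfaffianFour_sub_transpose_eq_of_isConj (hloc γ), hdet, neg_one_mul] at h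
    exact self_eq_neg.1 h
  obtain ⟨r, hr, hr_det, hr_comm⟩ := exists_orthogonal_det_eq_neg_one_commute φ hpf
  refine ⟨s.1 * r, mul_mem s.2 hr, ?_, fun γ ↦ ?_⟩
  · rw [det_mul, hdet, hr_det, neg_mul_neg, one_mul]
  · rw [mul_assoc, (hr_comm γ).eq, ← mul_assoc, hs, mul_assoc]

end Acceptable

theorem memSO_iff {m : ℕ} {g : Matrix (Fin m) (Fin m) ℂ} :
    memSO m g ↔ g ∈ specialOrthogonalGroup (Fin m) ℂ :=
  (mem_specialOrthogonalGroup_iff.trans (and_congr_left' (mem_orthogonalGroup_iff' _ _))).symm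

theorem exists_memSO_conj_of_isAcceptable {m : ℕ}
    (hm : IsAcceptable.{0, 0} (specialOrthogonalGroup (Fin m) ℂ)) {Γ : Type} [Group Γ] [Finite Γ]
    (φ φ' : Γ →* Matrix (Fin m) (Fin m) ℂ) (hφ : ∀ γ, memSO m (φ γ))
    (hφ' : ∀ γ, memSO m (φ' γ))
    (hloc : ∀ γ : Γ, ∃ g : Matrix (Fin m) (Fin m) ℂ, memSO m g ∧ φ' γ = g * φ γ * g⁻¹) :
    ∃ g : Matrix (Fin m) (Fin m) ℂ, memSO m g ∧ ∀ γ : Γ, φ' γ = g * φ γ * g⁻¹ := by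
  obtain ⟨g, hg⟩ := hm Γ (φ.codRestrict _ fun γ ↦ memSO_iff.1 (hφ γ))
    (φ'.codRestrict _ fun γ ↦ memSO_iff.1 (hφ' γ)) fun γ ↦ by
      obtain ⟨g, hg, hconj⟩ := hloc γ
      refine isConj_iff.2 ⟨⟨g, memSO_iff.1 hg⟩, Subtype.ext ?_⟩
      rw [Submonoid.coe_mul, Submonoid.coe_mul, coe_inv_specialOrthogonalGroup]
      exact hconj.symm
  refine ⟨g, memSO_iff.2 g.2, fun γ ↦ ?_⟩
  rw [← coe_inv_specialOrthogonalGroup]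
  exact congrArg Subtype.val (hg γ)

/-- The group `SO₄(ℂ)` is acceptable: any two pointwise (locally) conjugate homomorphisms
from a finite group into `SO₄(ℂ)` are globally conjugate.  (Group homomorphisms into
`SO₄(ℂ)` are encoded as monoid homomorphisms into the multiplicative monoid of matrices
landing in `SO₄(ℂ)`.) -/
theorem statement13 (Γ : Type) [Group Γ] [Finite Γ]
    (φ φ' : Γ →* Matrix (Fin 4) (Fin 4) ℂ)
    (hφ : ∀ γ, memSO 4 (φ γ)) (hφ' : ∀ γ, memSO 4 (φ' γ))
    (hloc : ∀ γ : Γ, ∃ g : Matrix (Fin 4) (Fin 4) ℂ,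
      memSO 4 g ∧ φ' γ = g * φ γ * g⁻¹) :
    ∃ g : Matrix (Fin 4) (Fin 4) ℂ, memSO 4 g ∧ ∀ γ : Γ, φ' γ = g * φ γ * g⁻¹ :=
  exists_memSO_conj_of_isAcceptable statement13_general φ φ' hφ hφ' hloc

end
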